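/- arXiv:2312.08696 — 2 statements merged into one kernel-verified Lean document; each statement's English description precedes it below -/
import Mathlib

section
/- Let u : ℝ² → ℝ² be a continuously differentiable vector field with compact support. Then b_emac(u,u,u) = 0; that is, ∫_{ℝ²} (2D(u)u)·u + (∇·u)|u|² dx = 0. -/
open MeasureTheory RealInnerProductSpace

noncomputable section

abbrev E2 := EuclideanSpace ℝ (Fin 2)

/-- divergence of a vector field on ℝ² -/
def dvg (u : E2 → E2) (x : E2) : ℝ :=
  ∑ i, fderiv ℝ u x (EuclideanSpace.single i 1) i

/-- convective trilinear form  b_conv(u,v,w) = ∫ ((u·∇)v)·w -/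
def bConv (u v w : E2 → E2) : ℝ :=
  ∫ x, ⟪fderiv ℝ v x (u x), w x⟫

/-- EMAC trilinear form  b_emac(u,v,w) = ∫ (2D(u)v)·w + (∇·u)(v·w),
where (2D(u)v)·w = (∇u v)·w + (∇u w)·v. -/
def bEmac (u v w : E2 → E2) : ℝ :=
  ∫ x, (⟪fderiv ℝ u x (v x), w x⟫ + ⟪fderiv ℝ u x (w x), v x⟫
    + dvg u x * ⟪v x, w x⟫)

/-- L² norm -/
def l2Norm {F : Type*} [NormedAddCommGroup F] (f : E2 → F) : ℝ :=
  (∫ x, ‖f x‖ ^ 2) ^ ((1 : ℝ) / 2)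

/-- H¹ norm -/
def h1Norm (f : E2 → E2) : ℝ := l2Norm f + l2Norm (fderiv ℝ f)

/-- H² norm -/
def h2Norm (f : E2 → E2) : ℝ :=
  l2Norm f + l2Norm (fderiv ℝ f) + l2Norm (fderiv ℝ (fderiv ℝ f))

/-- rotational field φ(x₁,x₂) = (−x₂, x₁) -/
def phi : E2 → E2 := fun x => (WithLp.equiv 2 (Fin 2 → ℝ)).symm ![-x 1, x 0]

/-!
The EMAC integrand with all three arguments equal to `u` is the divergence of the energy flux
`‖u‖² u`, and the divergence of an integrable field with integrable derivative has integral zero.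
-/

section IntegralFDeriv

variable {E F : Type*} [NormedAddCommGroup E] [NormedSpace ℝ E] [MeasurableSpace E] [BorelSpace E]
  [NormedAddCommGroup F] [NormedSpace ℝ F] {μ : Measure E} {f : E → F}

theorem integrable_fderiv_of_hasCompactSupport [IsFiniteMeasureOnCompacts μ]
    (hf : ContDiff ℝ 1 f) (hcf : HasCompactSupport f) : Integrable (fderiv ℝ f) μ :=
  (hf.continuous_fderiv one_ne_zero).integrable_of_hasCompactSupport (hcf.fderiv ℝ)

variable [FiniteDimensional ℝ E] [μ.IsAddHaarMeasure]

-- Integration by parts against the constant function `1`.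
theorem integral_fderiv_apply_eq_zero {v : E} (hf : Differentiable ℝ f) (hfi : Integrable f μ)
    (hfi' : Integrable (fun x => fderiv ℝ f x v) μ) : ∫ x, fderiv ℝ f x v ∂μ = 0 := by
  simpa using integral_smul_fderiv_eq_neg_fderiv_smul_of_integrable (f := fun _ : E => (1 : ℝ))
    (by simp) (by simpa using hfi') (by simpa using hfi) (by simp) (fun x _ => hf x)

theorem integral_fderiv_eq_zero (hf : Differentiable ℝ f) (hfi : Integrable f μ)
    (hfi' : Integrable (fderiv ℝ f) μ) : ∫ x, fderiv ℝ f x ∂μ = 0 := by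
  ext v
  rw [ContinuousLinearMap.integral_apply hfi']
  exact integral_fderiv_apply_eq_zero hf hfi (hfi'.apply_continuousLinearMap v)

end IntegralFDeriv

section Divergence

variable {E : Type*} [NormedAddCommGroup E] [NormedSpace ℝ E] {u : E → E}

/-- The divergence of a vector field, encoded without coordinates as the trace of its derivative.
It agrees with `dvg` on the plane, see `dvg_eq_divergence`. -/
def divergence (u : E → E) (x : E) : ℝ :=
  LinearMap.trace ℝ E (fderiv ℝ u x)

variable [FiniteDimensional ℝ E]

theorem divergence_smul {g : E → ℝ} {x : E} (hg : DifferentiableAt ℝ g x)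
    (hu : DifferentiableAt ℝ u x) :
    divergence (fun y => g y • u y) x = g x * divergence u x + fderiv ℝ g x (u x) := by
  simp only [divergence, fderiv_fun_smul hg hu, ContinuousLinearMap.toLinearMap_add,
    ContinuousLinearMap.toLinearMap_smul, ContinuousLinearMap.coe_smulRight,
    map_add, map_smul, LinearMap.trace_smulRight, smul_eq_mul, ContinuousLinearMap.coe_coe]

theorem integral_divergence_eq_zero [MeasurableSpace E] [BorelSpace E] {μ : Measure E}
    [μ.IsAddHaarMeasure] (hu : Differentiable ℝ u) (hui : Integrable u μ)
    (hui' : Integrable (fderiv ℝ u) μ) : ∫ x, divergence u x ∂μ = 0 := by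
  let traceCLM : (E →L[ℝ] E) →L[ℝ] ℝ :=
    LinearMap.toContinuousLinearMap (LinearMap.trace ℝ E ∘ₗ ContinuousLinearMap.coeLM ℝ)
  calc ∫ x, divergence u x ∂μ = traceCLM (∫ x, fderiv ℝ u x ∂μ) :=
        traceCLM.integral_comp_comm hui'
    _ = 0 := by rw [integral_fderiv_eq_zero hu hui hui', map_zero]

end Divergence

section EnergyFlux

variable {E : Type*} [NormedAddCommGroup E] [InnerProductSpace ℝ E] [FiniteDimensional ℝ E]
  {u : E → E}

theorem divergence_norm_sq_smul_self {x : E} (hu : DifferentiableAt ℝ u x) :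
    divergence (fun y => ‖u y‖ ^ 2 • u y) x =
      2 * ⟪fderiv ℝ u x (u x), u x⟫ + divergence u x * ‖u x‖ ^ 2 := by
  have fderiv_norm_sq_self : fderiv ℝ (fun y => ‖u y‖ ^ 2) x (u x) =
      2 * ⟪fderiv ℝ u x (u x), u x⟫ := by
    simp [hu.hasFDerivAt.norm_sq.fderiv, real_inner_comm]
  rw [divergence_smul (hu.norm_sq ℝ) hu, fderiv_norm_sq_self]
  ring

theorem bEmac_self_eq_zero_general [MeasurableSpace E] [BorelSpace E] {μ : Measure E}
    [μ.IsAddHaarMeasure] (hu : Differentiable ℝ u)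
    (hflux : Integrable (fun x => ‖u x‖ ^ 2 • u x) μ)
    (hflux' : Integrable (fderiv ℝ fun x => ‖u x‖ ^ 2 • u x) μ) :
    ∫ x, (2 * ⟪fderiv ℝ u x (u x), u x⟫ + divergence u x * ‖u x‖ ^ 2) ∂μ = 0 := by
  simp only [← divergence_norm_sq_smul_self (hu _)]
  exact integral_divergence_eq_zero ((hu.norm_sq ℝ).smul hu) hflux hflux'

end EnergyFlux

theorem dvg_eq_divergence (u : E2 → E2) (x : E2) : dvg u x = divergence u x := by
  simp [dvg, divergence, LinearMap.trace_eq_sum_inner _ (EuclideanSpace.basisFun (Fin 2) ℝ),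
    EuclideanSpace.inner_single_left]

theorem bEmac_self_eq_integral (u : E2 → E2) :
    bEmac u u u = ∫ x, (2 * ⟪fderiv ℝ u x (u x), u x⟫ + divergence u x * ‖u x‖ ^ 2) := by
  simp only [bEmac, dvg_eq_divergence, real_inner_self_eq_norm_sq, two_mul]

theorem bEmac_self_eq_zero
    (u : E2 → E2) (hu : ContDiff ℝ 1 u) (hcu : HasCompactSupport u) :
    bEmac u u u = 0 := by
  have contDiff_flux : ContDiff ℝ 1 fun x => ‖u x‖ ^ 2 • u x := (hu.norm_sq ℝ).smul hu
  have compact_flux : HasCompactSupport fun x => ‖u x‖ ^ 2 • u x := hcu.smul_left (f := (‖u ·‖ ^ 2))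
  rw [bEmac_self_eq_integral]
  exact bEmac_self_eq_zero_general (hu.differentiable one_ne_zero)
    (contDiff_flux.continuous.integrable_of_hasCompactSupport compact_flux)
    (integrable_fderiv_of_hasCompactSupport contDiff_flux compact_flux)
end
end

section
/- There exists a constant C > 0 such that for all compactly supported vector fields u, w : ℝ² → ℝ² with u twice continuously differentiable and w continuously differentiable, |b_emac(u,u,w)| ≤ C ‖u − w‖_{L²} ‖u‖_{H²} ‖w‖_{H¹}. -/
open MeasureTheory RealInnerProductSpace

noncomputable section

/-!
The integrand of `b(u,u,u)` is the divergence of `|u|² u`, so `b(u,u,u) = 0` and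
`b(u,u,w) = -b(u,u,u-w)`. Hölder's inequality with exponents `4, 4, 2` and Ladyzhenskaya's
inequality `‖g‖₄² ≤ Λ ‖g‖ ‖∇g‖` bound `b(u,v,w)²` by a multiple of
`‖∇u‖ ‖∇²u‖ ‖v‖ ‖∇v‖ ‖w‖²`. Applied to `b(u,u,u-w)` and combined with `‖∇u‖² ≤ 2 ‖u‖ ‖∇²u‖`, this
gives `|b(u,u,w)| ≲ ‖u-w‖ ‖u‖ ‖u‖_{H²}`; applied to `b(u,w,u) = b(u,u,w)`, it gives
`|b(u,u,w)| ≲ ‖u‖ ‖u‖_{H²} ‖w‖_{H¹}`. Since `‖u‖ ≤ 2 max(‖u-w‖, ‖w‖)`, the first bound suffices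
when the maximum is `‖w‖` and the second when it is `‖u-w‖`.
-/

open Module
open scoped ENNReal NNReal

set_option maxSynthPendingDepth 3

section Holder

lemma holderTriple_four_four_two : ENNReal.HolderTriple 4 4 2 where
  inv_add_inv_eq_inv := by
    have inv_four : (4 : ℝ≥0∞)⁻¹ = 2⁻¹ / 2 := by
      rw [div_eq_mul_inv, ← ENNReal.mul_inv (by simp) (by simp)]; norm_num
    rw [inv_four, ENNReal.add_halves]

variable {α G : Type*} [MeasurableSpace α] {μ : Measure α} [NormedAddCommGroup G]

lemma eLpNorm_two_sq_eq_lintegral (f : α → G) :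
    eLpNorm f 2 μ ^ 2 = ∫⁻ x, ‖f x‖ₑ ^ 2 ∂μ := by
  simpa using eLpNorm_nnreal_pow_eq_lintegral (f := f) (μ := μ) (p := 2) two_ne_zero

lemma enorm_integral_le_eLpNorm_one [NormedSpace ℝ G] (f : α → G) :
    ‖∫ x, f x ∂μ‖ₑ ≤ eLpNorm f 1 μ :=
  (enorm_integral_le_lintegral_enorm f).trans_eq eLpNorm_one_eq_lintegral_enorm.symm

variable {F₁ F₂ F₃ : Type*} [NormedAddCommGroup F₁] [NormedAddCommGroup F₂]
  [NormedAddCommGroup F₃] {f₁ : α → F₁} {f₂ : α → F₂} {f₃ : α → F₃} {g : α → G}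

lemma eLpNorm_le_mul_of_norm_le_mul {p q r : ℝ≥0∞} [p.HolderTriple q r] {c : ℝ≥0}
    (hf₁ : AEStronglyMeasurable f₁ μ) (hf₂ : AEStronglyMeasurable f₂ μ)
    (h : ∀ x, ‖g x‖ ≤ c * ‖f₁ x‖ * ‖f₂ x‖) :
    eLpNorm g r μ ≤ c * eLpNorm f₁ p μ * eLpNorm f₂ q μ :=
  (eLpNorm_mono_real h).trans <|
    eLpNorm_le_eLpNorm_mul_eLpNorm'_of_norm hf₁ hf₂ (fun y z => c * ‖y‖ * ‖z‖) c (by simp)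

lemma eLpNorm_le_mul_of_norm_le_mul_mul {p₁ p₂ p₃ q r : ℝ≥0∞} [p₁.HolderTriple p₂ q]
    [q.HolderTriple p₃ r] {c : ℝ≥0} (hf₁ : AEStronglyMeasurable f₁ μ)
    (hf₂ : AEStronglyMeasurable f₂ μ) (hf₃ : AEStronglyMeasurable f₃ μ)
    (h : ∀ x, ‖g x‖ ≤ c * ‖f₁ x‖ * ‖f₂ x‖ * ‖f₃ x‖) :
    eLpNorm g r μ ≤ c * eLpNorm f₁ p₁ μ * eLpNorm f₂ p₂ μ * eLpNorm f₃ p₃ μ :=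
  calc eLpNorm g r μ
      ≤ (1 : ℝ≥0) * eLpNorm (fun x => c * ‖f₁ x‖ * ‖f₂ x‖) q μ * eLpNorm f₃ p₃ μ :=
        eLpNorm_le_mul_of_norm_le_mul (by fun_prop) hf₃ (by simpa using h)
    _ ≤ c * eLpNorm f₁ p₁ μ * eLpNorm f₂ p₂ μ * eLpNorm f₃ p₃ μ := by
        rw [ENNReal.coe_one, one_mul]
        gcongr
        exact eLpNorm_le_mul_of_norm_le_mul hf₁ hf₂ (by simp)

end Holder

section Ladyzhenskaya

variable {F : Type*} [NormedAddCommGroup F] [NormedSpace ℝ F]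

/-- The elementary tensor `v ⊗ w`, encoded as the operator `φ ↦ φ v • w` on the dual of `F`. Since
`v ⊗ v` has norm `‖v‖ ^ 2`, the field `g ⊗ g` is a `C¹` substitute for the function `‖g‖ ^ 2`,
which need not be differentiable when `F` is not a Hilbert space. -/
def elementaryTensor : F →L[ℝ] F →L[ℝ] StrongDual ℝ F →L[ℝ] F :=
  (ContinuousLinearMap.smulRightL ℝ (StrongDual ℝ F) F).comp
    (NormedSpace.inclusionInDoubleDual ℝ F)

lemma norm_elementaryTensor_apply (v w : F) : ‖elementaryTensor v w‖ = ‖v‖ * ‖w‖ :=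
  (ContinuousLinearMap.norm_smulRight_apply _ w).trans <|
    congrArg (· * ‖w‖) ((NormedSpace.inclusionInDoubleDualLi ℝ).norm_map v)

variable {E : Type*} [NormedAddCommGroup E] [NormedSpace ℝ E] {g : E → F}

lemma norm_fderiv_elementaryTensor_self_le {x : E} (hg : DifferentiableAt ℝ g x) :
    ‖fderiv ℝ (fun y => elementaryTensor (g y) (g y)) x‖ ≤ 2 * ‖g x‖ * ‖fderiv ℝ g x‖ := by
  refine ContinuousLinearMap.opNorm_le_bound _ (by positivity) fun v => ?_
  rw [elementaryTensor.fderiv_of_bilinear hg hg]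
  calc ‖elementaryTensor (g x) (fderiv ℝ g x v) + elementaryTensor (fderiv ℝ g x v) (g x)‖
      ≤ ‖g x‖ * ‖fderiv ℝ g x v‖ + ‖fderiv ℝ g x v‖ * ‖g x‖ := by
        simpa only [norm_elementaryTensor_apply] using
          norm_add_le (elementaryTensor (g x) (fderiv ℝ g x v)) (elementaryTensor _ (g x))
    _ = 2 * ‖g x‖ * ‖fderiv ℝ g x v‖ := by ring
    _ ≤ 2 * ‖g x‖ * (‖fderiv ℝ g x‖ * ‖v‖) := by gcongr; exact (fderiv ℝ g x).le_opNorm v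
    _ = 2 * ‖g x‖ * ‖fderiv ℝ g x‖ * ‖v‖ := by ring

variable [MeasurableSpace E] [BorelSpace E] [FiniteDimensional ℝ E]
  (μ : Measure E) [μ.IsAddHaarMeasure]

/-- The constant of Ladyzhenskaya's inequality `‖g‖₄² ≤ Λ ‖g‖₂ ‖∇g‖₂` on a plane with Haar measure
`μ`: the factor `2` is the product rule, the other one the Gagliardo–Nirenberg–Sobolev constant of
`W^{1,1} ⊆ L²`. -/
def ladyzhenskayaConst : ℝ≥0 := 2 * eLpNormLESNormFDerivOneConst μ 2

theorem eLpNorm_four_sq_le (hE : finrank ℝ E = 2) (hg : ContDiff ℝ 1 g)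
    (hgc : HasCompactSupport g) :
    eLpNorm g 4 μ ^ 2 ≤ ladyzhenskayaConst μ * (eLpNorm g 2 μ * eLpNorm (fderiv ℝ g) 2 μ) := by
  set T : E → StrongDual ℝ F →L[ℝ] F := fun x => elementaryTensor (g x) (g x)
  have hT : ContDiff ℝ 1 T := ((elementaryTensor (F := F)).contDiff.comp hg).clm_apply hg
  have hTc : HasCompactSupport T := hgc.comp_left (g := fun v => elementaryTensor v v) (by simp)
  have hconj : NNReal.HolderConjugate (finrank ℝ E) 2 := by
    rw [hE]; exact NNReal.HolderConjugate.two_two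
  have hD : Continuous (fderiv ℝ g) := hg.continuous_fderiv one_ne_zero
  have norm_T : eLpNorm T 2 μ = eLpNorm g 4 μ ^ 2 := by
    have : eLpNorm T 2 μ = eLpNorm (fun x => ‖g x‖ ^ (2 : ℝ)) 2 μ :=
      eLpNorm_congr_norm_ae (.of_forall fun x => by simp [T, norm_elementaryTensor_apply, sq])
    rw [this, eLpNorm_norm_rpow g two_pos]
    norm_num
  have norm_fderiv_T : eLpNorm (fderiv ℝ T) 1 μ ≤
      (2 : ℝ≥0) * eLpNorm g 2 μ * eLpNorm (fderiv ℝ g) 2 μ :=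
    eLpNorm_le_mul_of_norm_le_mul hg.continuous.aestronglyMeasurable hD.aestronglyMeasurable
      fun x => norm_fderiv_elementaryTensor_self_le (hg.differentiable one_ne_zero x)
  calc eLpNorm g 4 μ ^ 2
      = eLpNorm T 2 μ := norm_T.symm
    _ ≤ eLpNormLESNormFDerivOneConst μ 2 * eLpNorm (fderiv ℝ T) 1 μ :=
        eLpNorm_le_eLpNorm_fderiv_one μ hT hTc hconj
    _ ≤ eLpNormLESNormFDerivOneConst μ 2 *
          ((2 : ℝ≥0) * eLpNorm g 2 μ * eLpNorm (fderiv ℝ g) 2 μ) := by gcongr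
    _ = ladyzhenskayaConst μ * (eLpNorm g 2 μ * eLpNorm (fderiv ℝ g) 2 μ) := by
        rw [ladyzhenskayaConst, ENNReal.coe_mul]; ring

end Ladyzhenskaya

section CompactSupport

variable {F G W : Type*} [NormedAddCommGroup F] [NormedSpace ℝ F] [NormedAddCommGroup G]
  [NormedSpace ℝ G] [NormedAddCommGroup W] [NormedSpace ℝ W]

lemma integrable_bilinear_of_hasCompactSupport_left {X : Type*} [TopologicalSpace X]
    [MeasurableSpace X] [OpensMeasurableSpace X] {μ : Measure X} [IsFiniteMeasureOnCompacts μ]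
    (B : F →L[ℝ] G →L[ℝ] W) {f : X → F} {g : X → G} (hf : Continuous f) (hg : Continuous g)
    (hfc : HasCompactSupport f) : Integrable (fun x => B (f x) (g x)) μ :=
  Continuous.integrable_of_hasCompactSupport (by fun_prop) <|
    hfc.mono <| Function.support_subset_iff'.mpr fun x hx => by
      simp [Function.notMem_support.mp hx]

variable {E : Type*} [NormedAddCommGroup E] [NormedSpace ℝ E] [MeasurableSpace E]
  [BorelSpace E] {μ : Measure E}

lemma memLp_fderiv_of_hasCompactSupport [IsFiniteMeasureOnCompacts μ] {f : E → F} {p : ℝ≥0∞}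
    (hf : ContDiff ℝ 1 f) (hfc : HasCompactSupport f) : MemLp (fderiv ℝ f) p μ :=
  (hf.continuous_fderiv one_ne_zero).memLp_of_hasCompactSupport (hfc.fderiv ℝ)

lemma integral_bilinear_fderiv_right_eq_neg_left_of_hasCompactSupport [FiniteDimensional ℝ E]
    [μ.IsAddHaarMeasure] (B : F →L[ℝ] G →L[ℝ] W) {f : E → F} {g : E → G} (hf : ContDiff ℝ 1 f)
    (hg : ContDiff ℝ 1 g) (hfc : HasCompactSupport f) (v : E) :
    ∫ x, B (f x) (fderiv ℝ g x v) ∂μ = -∫ x, B (fderiv ℝ f x v) (g x) ∂μ := by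
  have hDf : Continuous fun x => fderiv ℝ f x v :=
    (hf.continuous_fderiv one_ne_zero).clm_apply continuous_const
  have hDg : Continuous fun x => fderiv ℝ g x v :=
    (hg.continuous_fderiv one_ne_zero).clm_apply continuous_const
  exact integral_bilinear_fderiv_right_eq_neg_left_of_integrable
    (integrable_bilinear_of_hasCompactSupport_left B hDf hg.continuous (hfc.fderiv_apply ℝ v))
    (integrable_bilinear_of_hasCompactSupport_left B hf.continuous hDg hfc)
    (integrable_bilinear_of_hasCompactSupport_left B hf.continuous hg.continuous hfc)
    (fun x _ => hf.differentiable one_ne_zero x) (fun x _ => hg.differentiable one_ne_zero x)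

end CompactSupport

section Interpolation

variable {E F : Type*} [NormedAddCommGroup F] [InnerProductSpace ℝ F]

lemma eLpNorm_two_sq_eq_enorm_integral_inner {α : Type*} [MeasurableSpace α] {μ : Measure α}
    {f : α → F} (hf : MemLp f 2 μ) : eLpNorm f 2 μ ^ 2 = ‖∫ x, ⟪f x, f x⟫ ∂μ‖ₑ := by
  simp_rw [real_inner_self_eq_norm_sq]
  rw [Real.enorm_of_nonneg (by positivity),
    ofReal_integral_eq_lintegral_ofReal (hf.integrable_norm_pow two_ne_zero)
      (.of_forall fun x => by positivity),
    eLpNorm_two_sq_eq_lintegral]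
  simp [ENNReal.ofReal_pow]

section Directional

variable [NormedAddCommGroup E] [NormedSpace ℝ E] [MeasurableSpace E] [BorelSpace E]
  [FiniteDimensional ℝ E] (μ : Measure E) [μ.IsAddHaarMeasure] {u : E → F}

lemma integral_inner_fderiv_fderiv_apply_self (hu : ContDiff ℝ 2 u) (huc : HasCompactSupport u)
    (v : E) :
    ∫ x, ⟪u x, fderiv ℝ (fderiv ℝ u) x v v⟫ ∂μ = -∫ x, ⟪fderiv ℝ u x v, fderiv ℝ u x v⟫ ∂μ := by
  have hDu : ContDiff ℝ 1 (fderiv ℝ u) := hu.fderiv_right (by norm_num)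
  have fderiv_Dvu (x : E) :
      fderiv ℝ (fun y => fderiv ℝ u y v) x v = fderiv ℝ (fderiv ℝ u) x v v := by
    simp [fderiv_clm_apply (hDu.differentiable one_ne_zero x) (differentiableAt_const v)]
  simpa only [fderiv_Dvu, IsBoundedBilinearMap.toContinuousLinearMap_apply] using
    integral_bilinear_fderiv_right_eq_neg_left_of_hasCompactSupport (μ := μ)
      (isBoundedBilinearMap_inner (𝕜 := ℝ)).toContinuousLinearMap (hu.of_le one_le_two)
      (hDu.clm_apply (contDiff_const (c := v))) huc v

lemma eLpNorm_fderiv_apply_sq_le (hu : ContDiff ℝ 2 u) (huc : HasCompactSupport u) (v : E) :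
    eLpNorm (fun x => fderiv ℝ u x v) 2 μ ^ 2 ≤
      ‖v‖ₑ ^ 2 * (eLpNorm u 2 μ * eLpNorm (fderiv ℝ (fderiv ℝ u)) 2 μ) := by
  have hDu : ContDiff ℝ 1 (fderiv ℝ u) := hu.fderiv_right (by norm_num)
  have hDvu : MemLp (fun x => fderiv ℝ u x v) 2 μ :=
    (hDu.continuous.clm_apply continuous_const).memLp_of_hasCompactSupport (huc.fderiv_apply ℝ v)
  have pointwise (x : E) : ‖⟪u x, fderiv ℝ (fderiv ℝ u) x v v⟫‖ ≤
      (‖v‖₊ ^ 2 : ℝ≥0) * ‖u x‖ * ‖fderiv ℝ (fderiv ℝ u) x‖ :=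
    calc ‖⟪u x, fderiv ℝ (fderiv ℝ u) x v v⟫‖
        ≤ ‖u x‖ * (‖fderiv ℝ (fderiv ℝ u) x‖ * ‖v‖ * ‖v‖) :=
          (norm_inner_le_norm _ _).trans (by gcongr; exact ContinuousLinearMap.le_opNorm₂ _ v v)
      _ = (‖v‖₊ ^ 2 : ℝ≥0) * ‖u x‖ * ‖fderiv ℝ (fderiv ℝ u) x‖ := by
          rw [NNReal.coe_pow, coe_nnnorm]; ring
  calc eLpNorm (fun x => fderiv ℝ u x v) 2 μ ^ 2
      = ‖∫ x, ⟪u x, fderiv ℝ (fderiv ℝ u) x v v⟫ ∂μ‖ₑ := by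
        rw [integral_inner_fderiv_fderiv_apply_self μ hu huc, enorm_neg,
          eLpNorm_two_sq_eq_enorm_integral_inner hDvu]
    _ ≤ eLpNorm (fun x => ⟪u x, fderiv ℝ (fderiv ℝ u) x v v⟫) 1 μ :=
        enorm_integral_le_eLpNorm_one _
    _ ≤ (‖v‖₊ ^ 2 : ℝ≥0) * eLpNorm u 2 μ * eLpNorm (fderiv ℝ (fderiv ℝ u)) 2 μ :=
        eLpNorm_le_mul_of_norm_le_mul hu.continuous.aestronglyMeasurable
          (hDu.continuous_fderiv one_ne_zero).aestronglyMeasurable pointwise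
    _ = ‖v‖ₑ ^ 2 * (eLpNorm u 2 μ * eLpNorm (fderiv ℝ (fderiv ℝ u)) 2 μ) := by
        rw [ENNReal.coe_pow, enorm_eq_nnnorm, mul_assoc]

end Directional

variable [NormedAddCommGroup E] [InnerProductSpace ℝ E]

lemma opNorm_sq_le_sum_norm_sq {ι G : Type*} [Fintype ι] [NormedAddCommGroup G] [NormedSpace ℝ G]
    (b : OrthonormalBasis ι ℝ E) (L : E →L[ℝ] G) : ‖L‖ ^ 2 ≤ ∑ i, ‖L (b i)‖ ^ 2 := by
  refine (Real.le_sqrt (norm_nonneg _) (by positivity)).mp <|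
    L.opNorm_le_bound (Real.sqrt_nonneg _) fun v => ?_
  calc ‖L v‖ = ‖∑ i, ⟪b i, v⟫ • L (b i)‖ := by
        conv_lhs => rw [← b.sum_repr' v, map_sum]
        simp only [map_smul]
    _ ≤ ∑ i, ‖L (b i)‖ * ‖⟪b i, v⟫‖ :=
        norm_sum_le_of_le _ fun i _ => (norm_smul _ _).trans (mul_comm _ _) |>.le
    _ ≤ √(∑ i, ‖L (b i)‖ ^ 2) * √(∑ i, ‖⟪b i, v⟫‖ ^ 2) := Real.sum_mul_le_sqrt_mul_sqrt _ _ _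
    _ = √(∑ i, ‖L (b i)‖ ^ 2) * ‖v‖ := by
        rw [b.sum_sq_norm_inner_right, Real.sqrt_sq (norm_nonneg v)]

variable [MeasurableSpace E] [BorelSpace E] [FiniteDimensional ℝ E] (μ : Measure E)
  [μ.IsAddHaarMeasure]

theorem eLpNorm_fderiv_sq_le {u : E → F} (hu : ContDiff ℝ 2 u) (huc : HasCompactSupport u) :
    eLpNorm (fderiv ℝ u) 2 μ ^ 2 ≤
      finrank ℝ E * (eLpNorm u 2 μ * eLpNorm (fderiv ℝ (fderiv ℝ u)) 2 μ) := by
  let b := stdOrthonormalBasis ℝ E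
  have hDu : Continuous (fderiv ℝ u) := hu.continuous_fderiv two_ne_zero
  have pointwise (x : E) : ‖fderiv ℝ u x‖ₑ ^ 2 ≤ ∑ i, ‖fderiv ℝ u x (b i)‖ₑ ^ 2 := by
    have := opNorm_sq_le_sum_norm_sq b (fderiv ℝ u x)
    simp only [← coe_nnnorm] at this
    simp only [enorm_eq_nnnorm]
    exact_mod_cast this
  calc eLpNorm (fderiv ℝ u) 2 μ ^ 2
      = ∫⁻ x, ‖fderiv ℝ u x‖ₑ ^ 2 ∂μ := eLpNorm_two_sq_eq_lintegral _
    _ ≤ ∫⁻ x, ∑ i, ‖fderiv ℝ u x (b i)‖ₑ ^ 2 ∂μ := lintegral_mono pointwise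
    _ = ∑ i, eLpNorm (fun x => fderiv ℝ u x (b i)) 2 μ ^ 2 := by
        rw [lintegral_finsetSum' _ fun i _ => by fun_prop]
        simp only [eLpNorm_two_sq_eq_lintegral]
    _ ≤ ∑ i, ‖b i‖ₑ ^ 2 * (eLpNorm u 2 μ * eLpNorm (fderiv ℝ (fderiv ℝ u)) 2 μ) :=
        Finset.sum_le_sum fun i _ => eLpNorm_fderiv_apply_sq_le μ hu huc (b i)
    _ = finrank ℝ E * (eLpNorm u 2 μ * eLpNorm (fderiv ℝ (fderiv ℝ u)) 2 μ) := by
        simp [← ofReal_norm]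

end Interpolation

section L2Norm

variable {F : Type*} [NormedAddCommGroup F] {f g : E2 → F}

lemma l2Norm_nonneg (f : E2 → F) : 0 ≤ l2Norm f := by
  unfold l2Norm; positivity

lemma l2Norm_eq_toReal_eLpNorm (hf : AEStronglyMeasurable f) :
    l2Norm f = (eLpNorm f 2).toReal := by
  rw [toReal_eLpNorm hf, lpNorm_eq_integral_norm_rpow_toReal two_ne_zero ENNReal.ofNat_ne_top hf]
  simp [l2Norm]

lemma l2Norm_le_l2Norm_sub_add (hf : MemLp f 2) (hg : MemLp g 2) :
    l2Norm f ≤ l2Norm (f - g) + l2Norm g := by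
  rw [l2Norm_eq_toReal_eLpNorm hf.1, l2Norm_eq_toReal_eLpNorm (hf.1.sub hg.1),
    l2Norm_eq_toReal_eLpNorm hg.1]
  refine ENNReal.toReal_le_add ?_ (hf.sub hg).eLpNorm_ne_top hg.eLpNorm_ne_top
  simpa using eLpNorm_add_le (hf.1.sub hg.1) hg.1 one_le_two

lemma h1Norm_nonneg (f : E2 → E2) : 0 ≤ h1Norm f :=
  add_nonneg (l2Norm_nonneg _) (l2Norm_nonneg _)

lemma h2Norm_nonneg (f : E2 → E2) : 0 ≤ h2Norm f :=
  add_nonneg (h1Norm_nonneg f) (l2Norm_nonneg _)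

end L2Norm

section Divergence

lemma abs_dvg_le (u : E2 → E2) (x : E2) : |dvg u x| ≤ 2 * ‖fderiv ℝ u x‖ :=
  calc |dvg u x| ≤ ∑ i : Fin 2, ‖fderiv ℝ u x (EuclideanSpace.single i 1) i‖ :=
        norm_sum_le Finset.univ fun i => fderiv ℝ u x (EuclideanSpace.single i 1) i
    _ ≤ ∑ _i : Fin 2, ‖fderiv ℝ u x‖ := Finset.sum_le_sum fun i _ =>
        (PiLp.norm_apply_le _ i).trans <| by
          simpa using (fderiv ℝ u x).le_opNorm (EuclideanSpace.single i 1)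
    _ = 2 * ‖fderiv ℝ u x‖ := by simp

lemma continuous_dvg {u : E2 → E2} (hu : ContDiff ℝ 1 u) : Continuous (dvg u) := by
  have : Continuous (fderiv ℝ u) := hu.continuous_fderiv one_ne_zero
  unfold dvg
  fun_prop

lemma apply_eq_sum_apply_single_mul {ι : Type*} [Fintype ι] [DecidableEq ι]
    (L : EuclideanSpace ℝ ι →L[ℝ] ℝ) (y : EuclideanSpace ℝ ι) :
    L y = ∑ i, L (EuclideanSpace.single i 1) * y i := by
  conv_lhs => rw [← (EuclideanSpace.basisFun ι ℝ).sum_repr y]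
  simp [mul_comm]

lemma integral_mul_dvg {φ : E2 → ℝ} {u : E2 → E2} (hφ : ContDiff ℝ 1 φ) (hu : ContDiff ℝ 1 u)
    (hφc : HasCompactSupport φ) :
    ∫ x, φ x * dvg u x = -∫ x, fderiv ℝ φ x (u x) := by
  let B (i : Fin 2) : ℝ →L[ℝ] E2 →L[ℝ] ℝ :=
    ContinuousLinearMap.toSpanSingleton ℝ (EuclideanSpace.proj i)
  have hDφ (i : Fin 2) : Continuous fun x => fderiv ℝ φ x (EuclideanSpace.single i 1) :=
    (hφ.continuous_fderiv one_ne_zero).clm_apply continuous_const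
  have hDu (i : Fin 2) : Continuous fun x => fderiv ℝ u x (EuclideanSpace.single i 1) :=
    (hu.continuous_fderiv one_ne_zero).clm_apply continuous_const
  calc ∫ x, φ x * dvg u x
      = ∫ x, ∑ i, B i (φ x) (fderiv ℝ u x (EuclideanSpace.single i 1)) := by
        simp only [dvg, Finset.mul_sum]; rfl
    _ = ∑ i, ∫ x, B i (φ x) (fderiv ℝ u x (EuclideanSpace.single i 1)) :=
        integral_finsetSum _ fun i _ =>
          integrable_bilinear_of_hasCompactSupport_left (B i) hφ.continuous (hDu i) hφc
    _ = -∑ i, ∫ x, B i (fderiv ℝ φ x (EuclideanSpace.single i 1)) (u x) := by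
        simp only [integral_bilinear_fderiv_right_eq_neg_left_of_hasCompactSupport (B _) hφ hu hφc,
          Finset.sum_neg_distrib]
    _ = -∫ x, ∑ i, B i (fderiv ℝ φ x (EuclideanSpace.single i 1)) (u x) := by
        rw [integral_finsetSum _ fun i _ => integrable_bilinear_of_hasCompactSupport_left (B i)
          (hDφ i) hu.continuous (hφc.fderiv_apply ℝ _)]
    _ = -∫ x, fderiv ℝ φ x (u x) := by
        simp_rw [fun x => apply_eq_sum_apply_single_mul (fderiv ℝ φ x) (u x)]; rfl

end Divergence

local notation "Λ" => ladyzhenskayaConst (volume : Measure E2)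

section Emac

/-- The integrand `(2 D(u) v) · w + (∇ · u) (v · w)` of the EMAC form `bEmac u v w`. -/
def emacDensity (u v w : E2 → E2) (x : E2) : ℝ :=
  ⟪fderiv ℝ u x (v x), w x⟫ + ⟪fderiv ℝ u x (w x), v x⟫ + dvg u x * ⟪v x, w x⟫

variable {u v w w₁ w₂ : E2 → E2}

lemma bEmac_eq_integral_emacDensity (u v w : E2 → E2) :
    bEmac u v w = ∫ x, emacDensity u v w x := rfl

lemma norm_emacDensity_le (u v w : E2 → E2) (x : E2) :
    ‖emacDensity u v w x‖ ≤ 4 * ‖fderiv ℝ u x‖ * ‖v x‖ * ‖w x‖ := by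
  have inner_le (y z : E2) : ‖⟪fderiv ℝ u x y, z⟫‖ ≤ ‖fderiv ℝ u x‖ * ‖y‖ * ‖z‖ :=
    (norm_inner_le_norm _ _).trans (by gcongr; exact (fderiv ℝ u x).le_opNorm y)
  have dvg_le : ‖dvg u x * ⟪v x, w x⟫‖ ≤ 2 * ‖fderiv ℝ u x‖ * (‖v x‖ * ‖w x‖) := by
    rw [norm_mul]
    exact mul_le_mul (abs_dvg_le u x) (norm_inner_le_norm _ _) (norm_nonneg _) (by positivity)
  calc ‖emacDensity u v w x‖
      ≤ ‖⟪fderiv ℝ u x (v x), w x⟫‖ + ‖⟪fderiv ℝ u x (w x), v x⟫‖ + ‖dvg u x * ⟪v x, w x⟫‖ :=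
        norm_add₃_le
    _ ≤ ‖fderiv ℝ u x‖ * ‖v x‖ * ‖w x‖ + ‖fderiv ℝ u x‖ * ‖w x‖ * ‖v x‖
          + 2 * ‖fderiv ℝ u x‖ * (‖v x‖ * ‖w x‖) :=
        add_le_add_three (inner_le _ _) (inner_le _ _) dvg_le
    _ = 4 * ‖fderiv ℝ u x‖ * ‖v x‖ * ‖w x‖ := by ring

lemma continuous_emacDensity (hu : ContDiff ℝ 1 u) (hv : Continuous v) (hw : Continuous w) :
    Continuous (emacDensity u v w) := by
  have : Continuous (fderiv ℝ u) := hu.continuous_fderiv one_ne_zero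
  have : Continuous (dvg u) := continuous_dvg hu
  unfold emacDensity
  fun_prop

lemma integrable_emacDensity (hu : ContDiff ℝ 1 u) (huc : HasCompactSupport u)
    (hv : Continuous v) (hw : Continuous w) : Integrable (emacDensity u v w) :=
  (continuous_emacDensity hu hv hw).integrable_of_hasCompactSupport <|
    (huc.fderiv ℝ).mono <| Function.support_subset_iff'.mpr fun x hx =>
      norm_le_zero_iff.mp <| (norm_emacDensity_le u v w x).trans_eq <| by
        simp [Function.notMem_support.mp hx]

lemma bEmac_comm (u v w : E2 → E2) : bEmac u v w = bEmac u w v := by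
  simp only [bEmac, real_inner_comm, add_comm]

lemma bEmac_sub_right (hu : ContDiff ℝ 1 u) (huc : HasCompactSupport u) (hv : Continuous v)
    (hw₁ : Continuous w₁) (hw₂ : Continuous w₂) :
    bEmac u v (w₁ - w₂) = bEmac u v w₁ - bEmac u v w₂ := by
  simp only [bEmac_eq_integral_emacDensity]
  rw [← integral_sub (integrable_emacDensity hu huc hv hw₁) (integrable_emacDensity hu huc hv hw₂)]
  congr 1 with x
  simp only [emacDensity, Pi.sub_apply, map_sub, inner_sub_left, inner_sub_right]
  ring

lemma bEmac_self (hu : ContDiff ℝ 1 u) (huc : HasCompactSupport u) : bEmac u u u = 0 := by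
  have hsq : ContDiff ℝ 1 fun x => ‖u x‖ ^ 2 := hu.norm_sq ℝ
  have hsqc : HasCompactSupport fun x => ‖u x‖ ^ 2 :=
    huc.comp_left (g := fun y => ‖y‖ ^ 2) (by simp)
  have hdensity (x : E2) : emacDensity u u u x =
      fderiv ℝ (fun y => ‖u y‖ ^ 2) x (u x) + ‖u x‖ ^ 2 * dvg u x := by
    rw [((hu.differentiable one_ne_zero x).hasFDerivAt.norm_sq).fderiv]
    simp only [emacDensity, real_inner_comm, real_inner_self_eq_norm_sq, smul_apply,
      ContinuousLinearMap.comp_apply, coe_innerSL_apply, nsmul_eq_mul, Nat.cast_ofNat]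
    ring
  have hint₁ : Integrable fun x => fderiv ℝ (fun y => ‖u y‖ ^ 2) x (u x) :=
    integrable_bilinear_of_hasCompactSupport_left (ContinuousLinearMap.id ℝ (E2 →L[ℝ] ℝ))
      (hsq.continuous_fderiv one_ne_zero) hu.continuous (hsqc.fderiv ℝ)
  have hint₂ : Integrable fun x => ‖u x‖ ^ 2 * dvg u x :=
    integrable_bilinear_of_hasCompactSupport_left (ContinuousLinearMap.mul ℝ ℝ)
      hsq.continuous (continuous_dvg hu) hsqc
  simp only [bEmac_eq_integral_emacDensity, hdensity]
  rw [integral_add hint₁ hint₂, integral_mul_dvg hsq hu hsqc, add_neg_cancel]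

lemma bEmac_self_sub (hu : ContDiff ℝ 1 u) (huc : HasCompactSupport u) (hw : Continuous w) :
    bEmac u u (u - w) = -bEmac u u w := by
  rw [bEmac_sub_right hu huc hu.continuous hu.continuous hw, bEmac_self hu huc, zero_sub]

lemma enorm_bEmac_le (hv : AEStronglyMeasurable v) (hw : AEStronglyMeasurable w) :
    ‖bEmac u v w‖ₑ ≤ 4 * eLpNorm (fderiv ℝ u) 4 * eLpNorm v 4 * eLpNorm w 2 := by
  have := holderTriple_four_four_two
  have hölder : eLpNorm (emacDensity u v w) 1 ≤
      (4 : ℝ≥0) * eLpNorm (fderiv ℝ u) 4 * eLpNorm v 4 * eLpNorm w 2 :=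
    eLpNorm_le_mul_of_norm_le_mul_mul (q := 2) (measurable_fderiv ℝ u).aestronglyMeasurable hv hw
      (norm_emacDensity_le u v w)
  exact (enorm_integral_le_eLpNorm_one (emacDensity u v w)).trans hölder

lemma enorm_bEmac_sq_le (hu : ContDiff ℝ 2 u) (huc : HasCompactSupport u) (hv : ContDiff ℝ 1 v)
    (hvc : HasCompactSupport v) (hw : AEStronglyMeasurable w) :
    ‖bEmac u v w‖ₑ ^ 2 ≤ 16 * Λ ^ 2 *
      (eLpNorm (fderiv ℝ u) 2 * eLpNorm (fderiv ℝ (fderiv ℝ u)) 2) *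
      (eLpNorm v 2 * eLpNorm (fderiv ℝ v) 2) * eLpNorm w 2 ^ 2 := by
  have hE : finrank ℝ E2 = 2 := finrank_euclideanSpace_fin
  calc ‖bEmac u v w‖ₑ ^ 2
      ≤ (4 * eLpNorm (fderiv ℝ u) 4 volume * eLpNorm v 4 volume * eLpNorm w 2 volume) ^ 2 := by
        gcongr
        exact enorm_bEmac_le hv.continuous.aestronglyMeasurable hw
    _ = 16 * eLpNorm (fderiv ℝ u) 4 volume ^ 2 * eLpNorm v 4 volume ^ 2 *
          eLpNorm w 2 volume ^ 2 := by ring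
    _ ≤ 16 * (Λ * (eLpNorm (fderiv ℝ u) 2 volume * eLpNorm (fderiv ℝ (fderiv ℝ u)) 2 volume)) *
          (Λ * (eLpNorm v 2 volume * eLpNorm (fderiv ℝ v) 2 volume)) * eLpNorm w 2 volume ^ 2 := by
        gcongr
        · exact eLpNorm_four_sq_le volume hE (hu.fderiv_right (by norm_num)) (huc.fderiv ℝ)
        · exact eLpNorm_four_sq_le volume hE hv hvc
    _ = 16 * Λ ^ 2 * (eLpNorm (fderiv ℝ u) 2 volume * eLpNorm (fderiv ℝ (fderiv ℝ u)) 2 volume) *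
          (eLpNorm v 2 volume * eLpNorm (fderiv ℝ v) 2 volume) * eLpNorm w 2 volume ^ 2 := by ring

lemma bEmac_sq_le (hu : ContDiff ℝ 2 u) (huc : HasCompactSupport u) (hv : ContDiff ℝ 1 v)
    (hvc : HasCompactSupport v) (hw : MemLp w 2) :
    bEmac u v w ^ 2 ≤ 16 * Λ ^ 2 *
      (l2Norm (fderiv ℝ u) * l2Norm (fderiv ℝ (fderiv ℝ u))) *
      (l2Norm v * l2Norm (fderiv ℝ v)) * l2Norm w ^ 2 := by
  have hDu : MemLp (fderiv ℝ u) 2 := memLp_fderiv_of_hasCompactSupport (hu.of_le one_le_two) huc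
  have hD2u : MemLp (fderiv ℝ (fderiv ℝ u)) 2 :=
    memLp_fderiv_of_hasCompactSupport (hu.fderiv_right (by norm_num)) (huc.fderiv ℝ)
  have hv₂ : MemLp v 2 := hv.continuous.memLp_of_hasCompactSupport hvc
  have hDv : MemLp (fderiv ℝ v) 2 := memLp_fderiv_of_hasCompactSupport hv hvc
  rw [l2Norm_eq_toReal_eLpNorm hDu.1, l2Norm_eq_toReal_eLpNorm hD2u.1,
    l2Norm_eq_toReal_eLpNorm hv₂.1, l2Norm_eq_toReal_eLpNorm hDv.1, l2Norm_eq_toReal_eLpNorm hw.1]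
  simpa using ENNReal.toReal_mono (by finiteness) (enorm_bEmac_sq_le hu huc hv hvc hw.1)

lemma l2Norm_fderiv_sq_le (hu : ContDiff ℝ 2 u) (huc : HasCompactSupport u) :
    l2Norm (fderiv ℝ u) ^ 2 ≤ 2 * (l2Norm u * l2Norm (fderiv ℝ (fderiv ℝ u))) := by
  have hu₂ : MemLp u 2 := hu.continuous.memLp_of_hasCompactSupport huc
  have hDu : MemLp (fderiv ℝ u) 2 := memLp_fderiv_of_hasCompactSupport (hu.of_le one_le_two) huc
  have hD2u : MemLp (fderiv ℝ (fderiv ℝ u)) 2 :=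
    memLp_fderiv_of_hasCompactSupport (hu.fderiv_right (by norm_num)) (huc.fderiv ℝ)
  rw [l2Norm_eq_toReal_eLpNorm hDu.1, l2Norm_eq_toReal_eLpNorm hu₂.1,
    l2Norm_eq_toReal_eLpNorm hD2u.1]
  simpa using ENNReal.toReal_mono (by finiteness) (eLpNorm_fderiv_sq_le volume hu huc)

lemma abs_bEmac_self_le_l2Norm_sub (hu : ContDiff ℝ 2 u) (huc : HasCompactSupport u)
    (hw : Continuous w) (hwc : HasCompactSupport w) :
    |bEmac u u w| ≤ 6 * Λ * l2Norm (u - w) * l2Norm u * h2Norm u := by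
  have hu₀ := l2Norm_nonneg u
  have hDu₀ := l2Norm_nonneg (fderiv ℝ u)
  have hD2u₀ := l2Norm_nonneg (fderiv ℝ (fderiv ℝ u))
  have hsub₀ := l2Norm_nonneg (u - w)
  have hD2u : l2Norm (fderiv ℝ (fderiv ℝ u)) ≤ h2Norm u := by unfold h2Norm; linarith
  have hu₂ := h2Norm_nonneg u
  have hsub : MemLp (u - w) 2 := (hu.continuous.sub hw).memLp_of_hasCompactSupport (huc.sub hwc)
  refine abs_le_of_sq_le_sq ?_ (by positivity)
  calc bEmac u u w ^ 2
      = bEmac u u (u - w) ^ 2 := by rw [bEmac_self_sub (hu.of_le one_le_two) huc hw, neg_sq]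
    _ ≤ 16 * Λ ^ 2 * (l2Norm (fderiv ℝ u) * l2Norm (fderiv ℝ (fderiv ℝ u))) *
          (l2Norm u * l2Norm (fderiv ℝ u)) * l2Norm (u - w) ^ 2 :=
        bEmac_sq_le hu huc (hu.of_le one_le_two) huc hsub
    _ = 16 * Λ ^ 2 * (l2Norm u * l2Norm (fderiv ℝ (fderiv ℝ u))) * l2Norm (u - w) ^ 2 *
          l2Norm (fderiv ℝ u) ^ 2 := by ring
    _ ≤ 16 * Λ ^ 2 * (l2Norm u * l2Norm (fderiv ℝ (fderiv ℝ u))) * l2Norm (u - w) ^ 2 *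
          (2 * (l2Norm u * l2Norm (fderiv ℝ (fderiv ℝ u)))) := by
        gcongr
        exact l2Norm_fderiv_sq_le hu huc
    _ = 32 * (Λ * l2Norm (u - w) * l2Norm u * l2Norm (fderiv ℝ (fderiv ℝ u))) ^ 2 := by ring
    _ ≤ 36 * (Λ * l2Norm (u - w) * l2Norm u * h2Norm u) ^ 2 := by gcongr; norm_num
    _ = (6 * Λ * l2Norm (u - w) * l2Norm u * h2Norm u) ^ 2 := by ring

lemma abs_bEmac_self_le_h1Norm (hu : ContDiff ℝ 2 u) (huc : HasCompactSupport u)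
    (hw : ContDiff ℝ 1 w) (hwc : HasCompactSupport w) :
    |bEmac u u w| ≤ 4 * Λ * l2Norm u * h2Norm u * h1Norm w := by
  have hu₀ := l2Norm_nonneg u
  have hDu₀ := l2Norm_nonneg (fderiv ℝ u)
  have hD2u₀ := l2Norm_nonneg (fderiv ℝ (fderiv ℝ u))
  have hw₀ := l2Norm_nonneg w
  have hDw₀ := l2Norm_nonneg (fderiv ℝ w)
  have hu₂ := h2Norm_nonneg u
  have hw₁ := h1Norm_nonneg w
  refine abs_le_of_sq_le_sq ?_ (by positivity)
  calc bEmac u u w ^ 2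
      = bEmac u w u ^ 2 := by rw [bEmac_comm]
    _ ≤ 16 * Λ ^ 2 * (l2Norm (fderiv ℝ u) * l2Norm (fderiv ℝ (fderiv ℝ u))) *
          (l2Norm w * l2Norm (fderiv ℝ w)) * l2Norm u ^ 2 :=
        bEmac_sq_le hu huc hw hwc (hu.continuous.memLp_of_hasCompactSupport huc)
    _ ≤ 16 * Λ ^ 2 * (h2Norm u * h2Norm u) * (h1Norm w * h1Norm w) * l2Norm u ^ 2 := by
        gcongr <;> simp only [h1Norm, h2Norm] <;> linarith
    _ = (4 * Λ * l2Norm u * h2Norm u * h1Norm w) ^ 2 := by ring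

end Emac

theorem bEmac_bound_diff_l2_h2_h1
    : ∃ C : ℝ, 0 < C ∧ ∀ u w : E2 → E2,
      ContDiff ℝ 2 u → ContDiff ℝ 1 w →
      HasCompactSupport u → HasCompactSupport w →
      |bEmac u u w| ≤ C * l2Norm (fun x => u x - w x) * h2Norm u * h1Norm w := by
  refine ⟨12 * Λ + 1, by positivity, fun u w hu hw huc hwc => ?_⟩
  change |bEmac u u w| ≤ (12 * Λ + 1) * l2Norm (u - w) * h2Norm u * h1Norm w
  have hsub := l2Norm_nonneg (u - w)
  have hu₂ := h2Norm_nonneg u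
  have hw₁ := h1Norm_nonneg w
  have hw₀ : l2Norm w ≤ h1Norm w := le_add_of_nonneg_right (l2Norm_nonneg _)
  have triangle : l2Norm u ≤ l2Norm (u - w) + l2Norm w :=
    l2Norm_le_l2Norm_sub_add (hu.continuous.memLp_of_hasCompactSupport huc)
      (hw.continuous.memLp_of_hasCompactSupport hwc)
  obtain close | far := le_total (l2Norm (u - w)) (l2Norm w)
  · calc |bEmac u u w|
        ≤ 6 * Λ * l2Norm (u - w) * l2Norm u * h2Norm u :=
          abs_bEmac_self_le_l2Norm_sub hu huc hw.continuous hwc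
      _ ≤ 6 * Λ * l2Norm (u - w) * (2 * h1Norm w) * h2Norm u := by gcongr; linarith
      _ = 12 * Λ * l2Norm (u - w) * h2Norm u * h1Norm w := by ring
      _ ≤ (12 * Λ + 1) * l2Norm (u - w) * h2Norm u * h1Norm w := by gcongr; linarith
  · calc |bEmac u u w|
        ≤ 4 * Λ * l2Norm u * h2Norm u * h1Norm w := abs_bEmac_self_le_h1Norm hu huc hw hwc
      _ ≤ 4 * Λ * (2 * l2Norm (u - w)) * h2Norm u * h1Norm w := by gcongr; linarith
      _ = 8 * Λ * l2Norm (u - w) * h2Norm u * h1Norm w := by ring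
      _ ≤ (12 * Λ + 1) * l2Norm (u - w) * h2Norm u * h1Norm w := by gcongr; linarith
end
end
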